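/- For every s ∈ Σ(T), the set A_s is finite, with |A_s| ≤ last(s); consequently A*_s is also finite with |A*_s| ≤ last(s). -/

import Mathlib

/-!
The map `r ↦ last r` embeds `A s` into `{1, …, last s}`. It is injective because an initial
segment `r` of `s` of successor length satisfies `last r = s (pred (dom r))`, and `s` is injective,
so `last r` determines the length of `r` and hence `r` itself (`ext_lastVal_inj`). It is bounded by
`last s` because `last s` is taken at the final position of `s`, which lies outside the domain of
`r*`; thus `last s ∈ im s \ im r*`, and `last r` is the minimum of this set (`lastVal_le_of_mem_A`).
The bound for `A*_s` follows since it is an image of `A s`.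
-/

/-- An element of the tree `T`: an injective, co-infinite sequence `t : α → ℕ`
(with `ℕ = {1,2,3,…}`) of countable ordinal length `α`.  We encode such a
sequence as a total function `f : Ordinal → ℕ` taking a *positive* value
exactly on the ordinals `β < len` (the value `0` plays the role of
"undefined", which is harmless since the paper's `ℕ` starts at `1`). -/
structure CSeq where
  /-- the length (domain) of the sequence, a countable ordinal -/
  len : Ordinal
  len_countable : len < Ordinal.omega 1
  /-- the sequence itself, with `f β = 0` meaning "β is outside the domain" -/
  f : Ordinal → ℕ
  dom_iff : ∀ β, β < len ↔ f β ≠ 0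
  inj : ∀ β γ, β < len → γ < len → f β = f γ → β = γ
  coinf : {n : ℕ | n ≠ 0 ∧ n ∉ Set.range f}.Infinite

namespace CSeq

/-- the extension order on `T`: `s ≤ t` iff `s = t ↾ dom s`. -/
def Ext (s t : CSeq) : Prop := ∀ β, s.f β ≠ 0 → t.f β = s.f β

/-- strict extension: `s < t`. -/
def ExtLt (s t : CSeq) : Prop := s.Ext t ∧ s ≠ t

/-- the image `im t ⊆ ℕ = {1,2,…}` of a sequence `t`. -/
def im (t : CSeq) : Set ℕ := {n | n ≠ 0 ∧ n ∈ Set.range t.f}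

/-- `t ∈ Σ(T)`: the length of `t` is a successor ordinal. -/
def IsSucc (t : CSeq) : Prop := ∃ α, t.len = α + 1

/-- `last t`: the last value of a sequence (of successor length). -/
noncomputable def lastVal (t : CSeq) : ℕ := t.f (Ordinal.pred t.len)

/-- the restriction `t ↾ γ` of a sequence `t` to an initial segment `γ ≤ dom t`. -/
noncomputable def restrict (t : CSeq) (γ : Ordinal) (h : γ ≤ t.len) : CSeq where
  len := γ
  len_countable := lt_of_le_of_lt h t.len_countable
  f := fun β => if β < γ then t.f β else 0
  dom_iff := by
    intro β
    constructor
    · intro hβ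
      simpa [hβ] using (t.dom_iff β).1 (lt_of_lt_of_le hβ h)
    · intro hβ
      by_contra hc
      simp [hc] at hβ
  inj := by
    intro β γ' hβ hγ
    simp only [if_pos hβ, if_pos hγ]
    exact t.inj β γ' (lt_of_lt_of_le hβ h) (lt_of_lt_of_le hγ h)
  coinf := t.coinf.mono (by
    rintro n ⟨hn0, hn⟩
    refine ⟨hn0, ?_⟩
    rintro ⟨β, hβ⟩
    by_cases hb : β < γ
    · exact hn ⟨β, by simpa [hb] using hβ⟩
    · simp only [if_neg hb] at hβ
      exact hn0 hβ.symm)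

/-- `t* := t ↾ α` for `t` of successor length `α + 1`: the immediate
predecessor of `t` in the tree. -/
noncomputable def star (t : CSeq) : CSeq := t.restrict (Ordinal.pred t.len) (Ordinal.pred_le_self _)

/-- `A_t := {s ≤ t : s ∈ Σ(T), last s = min (im t \ im s*)}`. -/
def A (t : CSeq) : Set CSeq :=
  {s | s.Ext t ∧ s.IsSucc ∧ s.lastVal = sInf (t.im \ s.star.im)}

/-- `A*_t := {s* : s ∈ A_t}`. -/
def Astar (t : CSeq) : Set CSeq := star '' A t

/-- the graph `G` with vertex set `T` and edges `{t't : t' ∈ A*_t}`. -/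
def G : SimpleGraph CSeq := SimpleGraph.fromRel (fun t' t => t' ∈ Astar t)

/-- the graph `G'` with vertex set `T` and edges `{t't : t' ∈ A_t}`. -/
def G' : SimpleGraph CSeq := SimpleGraph.fromRel (fun t' t => t' ∈ A t)

/-- two `t`–`t'` paths are independent (internally disjoint) if they share no
vertices other than `t` and `t'`. -/
def InternallyDisjoint {t t' : CSeq} (p q : G.Path t t') : Prop :=
  ∀ v, v ∈ p.1.support → v ∈ q.1.support → v = t ∨ v = t'

/-- `t'` is a `k`-extension of `t ∈ Σ(T)` if `t' > t` and every element of
`im t' \ im t` is greater than `a_{k+1}`, where `a_1 < … < a_{k+1}` are the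
`k+1` smallest elements of `ℕ \ (im t ∪ [last t])`.  (Recall `Nat.nth p k` is
the `(k+1)`-st element of `{n | p n}` in increasing order.) -/
def IsKExt (k : ℕ) (t t' : CSeq) : Prop :=
  t.ExtLt t' ∧ ∀ n ∈ t'.im \ t.im,
    Nat.nth (fun m => m ∉ t.im ∧ t.lastVal < m) k < n

end CSeq

namespace CSeq

theorem Ext.len_le {r s : CSeq} (h : r.Ext s) : r.len ≤ s.len := by
  by_contra! hlt
  have h0 := (r.dom_iff _).1 hlt
  have h1 : s.f s.len ≠ 0 := by rw [h _ h0]; exact h0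
  exact lt_irrefl _ ((s.dom_iff _).2 h1)

/-- An initial segment of `s` is determined by its length. -/
theorem Ext.eq_of_len_eq {r r' s : CSeq} (h : r.Ext s) (h' : r'.Ext s) (hl : r.len = r'.len) :
    r = r' := by
  have hf : r.f = r'.f := by
    funext β
    by_cases hβ : r.f β = 0
    · by_contra hne
      rw [hβ] at hne
      have := (r'.dom_iff β).2 (Ne.symm hne)
      rw [← hl] at this
      exact (r.dom_iff β).1 this hβ
    · have hβ' := (r'.dom_iff β).1 (hl ▸ (r.dom_iff β).2 hβ)
      rw [← h β hβ, h' β hβ']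
  cases r
  cases r'
  simp only at hl hf
  subst hl hf
  rfl

theorem IsSucc.pred_add_one {r : CSeq} (h : r.IsSucc) : Ordinal.pred r.len + 1 = r.len := by
  obtain ⟨α, hα⟩ := h
  rw [hα, Ordinal.pred_add_one]

theorem IsSucc.pred_lt {r : CSeq} (h : r.IsSucc) : Ordinal.pred r.len < r.len := by
  conv_rhs => rw [← h.pred_add_one]
  exact Order.lt_add_one_iff.2 le_rfl

theorem IsSucc.lastVal_ne_zero {r : CSeq} (h : r.IsSucc) : r.lastVal ≠ 0 :=
  (r.dom_iff _).1 h.pred_lt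

/-- Initial segments of `s` of successor length are determined by their last value, because `s` is
injective. -/
theorem ext_lastVal_inj {r r' s : CSeq} (h : r.Ext s) (h' : r'.Ext s) (hr : r.IsSucc)
    (hr' : r'.IsSucc) (e : r.lastVal = r'.lastVal) : r = r' := by
  refine h.eq_of_len_eq h' ?_
  rw [← hr.pred_add_one, ← hr'.pred_add_one]
  congr 1
  refine s.inj _ _ (hr.pred_lt.trans_le h.len_le) (hr'.pred_lt.trans_le h'.len_le) ?_
  rw [h _ hr.lastVal_ne_zero, h' _ hr'.lastVal_ne_zero]
  exact e

theorem lastVal_le_of_mem_A {r s : CSeq} (hs : s.IsSucc) (hr : r ∈ A s) :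
    r.lastVal ≤ s.lastVal := by
  obtain ⟨hext, hsucc, hlast⟩ := hr
  rw [hlast]
  refine Nat.sInf_le ⟨⟨hs.lastVal_ne_zero, _, rfl⟩, ?_⟩
  rintro ⟨-, β, hβ⟩
  -- `β` would be a position of `r*` at which `s` already takes the value `last s`.
  have hlt : β < Ordinal.pred r.len := by
    by_contra hc
    have h0 : r.star.f β = 0 := if_neg hc
    exact hs.lastVal_ne_zero (hβ.symm.trans h0)
  have hβr : β < r.len := hlt.trans hsucc.pred_lt
  have hval : r.f β = s.lastVal := (if_pos hlt).symm.trans hβ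
  have hβs : β = Ordinal.pred s.len :=
    s.inj _ _ (hβr.trans_le hext.len_le) hs.pred_lt
      ((hext β ((r.dom_iff β).1 hβr)).trans hval)
  have h1 : Ordinal.pred s.len + 1 < Ordinal.pred r.len + 1 := by
    rw [← hβs]; simpa using hlt
  rw [hs.pred_add_one, hsucc.pred_add_one] at h1
  exact absurd hext.len_le h1.not_ge

end CSeq

open CSeq in
/-- For every `s ∈ Σ(T)` the set `A_s` is finite with
`|A_s| ≤ last s`; consequently `A*_s` is finite with `|A*_s| ≤ last s`. -/
theorem stmt4 (s : CSeq) (hs : s.IsSucc) :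
    (A s).Finite ∧ (A s).encard ≤ (s.lastVal : ℕ∞) ∧
    (Astar s).Finite ∧ (Astar s).encard ≤ (s.lastVal : ℕ∞) := by
  have hinj : Set.InjOn lastVal (A s) := fun r hr r' hr' e =>
    ext_lastVal_inj hr.1 hr'.1 hr.2.1 hr'.2.1 e
  have hmaps : lastVal '' A s ⊆ Set.Icc 1 s.lastVal := by
    rintro _ ⟨r, hr, rfl⟩
    exact ⟨Nat.one_le_iff_ne_zero.2 hr.2.1.lastVal_ne_zero, lastVal_le_of_mem_A hs hr⟩
  have hfin : (A s).Finite := ((Set.finite_Icc _ _).subset hmaps).of_finite_image hinj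
  have hcard : (A s).encard ≤ (s.lastVal : ℕ∞) := by
    rw [← hinj.encard_image]
    refine (Set.encard_le_encard hmaps).trans ?_
    rw [← Finset.coe_Icc, Set.encard_coe_eq_coe_finsetCard]
    simp
  exact ⟨hfin, hcard, hfin.image _, (Set.encard_image_le _ _).trans hcard⟩
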